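/- arXiv:1801.01803 — 6 statements merged into one kernel-verified Lean document; each statement's English description precedes it below -/
import Mathlib

section
/- Let M ≥ 1 and T ≥ 1 be integers, L = min(M,T), and let the initial ages h_{1,1} > h_{1,2} > … > h_{1,M} be strictly decreasing positive integers. Then for every frame k ≥ 1 and every position j ∈ {1,…,L}, the j-th client served by the round-robin schedule in frame k, namely i_j = σ((k−1)L + j − 1), satisfies h_{k,i_j} ≥ h_{k,i'} for every client i' ∈ {1,…,M} \ {i_1,…,i_{j−1}}. In other words, each delivery of the round-robin schedule goes to a client of maximal current age among clients not yet served in that frame, so the round-robin schedule is a realization of the Greedy policy when all channels are error-free. -/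
/-- The age process: `ageP h1 s k i` is the age of client `i` at frame `k` (frames
are 1-indexed; `ageP h1 s 1 = h1`).  The ages evolve by `h_{k+1,i} = 1` if `i ∈ s k`
and `h_{k+1,i} = h_{k,i} + 1` otherwise. -/
def ageP (h1 : ℕ → ℕ) (s : ℕ → Finset ℕ) : ℕ → ℕ → ℕ
  | 0, i => h1 i
  | 1, i => h1 i
  | (k+2), i => if i ∈ s (k+1) then 1 else ageP h1 s (k+1) i + 1

/-- `rrClient M n = (n mod M) + 1`, the client served in the `n`-th round-robin slot. -/
def rrClient (M n : ℕ) : ℕ := n % M + 1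

/-- The round-robin schedule: in frame `k ≥ 1` the `L = min M T` distinct clients
`σ((k-1)L), …, σ(kL - 1)` are served. -/
def rrSched (M T : ℕ) (k : ℕ) : Finset ℕ :=
  (Finset.range (min M T)).image (fun j => rrClient M ((k - 1) * min M T + j))

/-!
Number the slots consecutively, so that slot `n` serves client `rrClient M n` and frame `k + 1`
starts at slot `k * L`, where `L = min M T`. The `M` slots from there on visit every client exactly
once, and the invariant is that the ages at frame `k + 1` never increase along this window. When the
window moves on by `L`, the slots that stay in it belong to clients that were not served and all age
by one, while those that enter at its end belong to clients just served, of age `1`, the least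
possible.
-/

section AgeProcess

variable {h1 : ℕ → ℕ} {s : ℕ → Finset ℕ} {k i : ℕ}

theorem ageP_add_two_of_mem (hi : i ∈ s (k + 1)) : ageP h1 s (k + 2) i = 1 :=
  if_pos hi

theorem ageP_add_two_of_notMem (hi : i ∉ s (k + 1)) :
    ageP h1 s (k + 2) i = ageP h1 s (k + 1) i + 1 :=
  if_neg hi

theorem one_le_ageP_add_two : 1 ≤ ageP h1 s (k + 2) i := by
  by_cases hi : i ∈ s (k + 1)
  · exact (ageP_add_two_of_mem hi).ge
  · exact (Nat.le_add_left 1 _).trans_eq (ageP_add_two_of_notMem hi).symm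

end AgeProcess

section RoundRobin

variable {M T k n : ℕ}

theorem rrClient_of_lt (hn : n < M) : rrClient M n = n + 1 :=
  congrArg (· + 1) (Nat.mod_eq_of_lt hn)

theorem rrClient_add_self (M n : ℕ) : rrClient M (n + M) = rrClient M n :=
  congrArg (· + 1) (Nat.add_mod_right n M)

theorem injOn_rrClient_Ico (M n : ℕ) : Set.InjOn (rrClient M) (Finset.Ico n (n + M)) :=
  (add_left_injective 1).comp_injOn (Nat.mod_injOn_Ico n M)

theorem image_rrClient_Ico (M n : ℕ) :
    (Finset.Ico n (n + M)).image (rrClient M) = Finset.Icc 1 M := by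
  calc (Finset.Ico n (n + M)).image (rrClient M)
      = ((Finset.Ico n (n + M)).image (· % M)).image (· + 1) := by
        rw [Finset.image_image]; rfl
    _ = (Finset.Ico 0 M).image (· + 1) := by rw [Nat.image_Ico_mod, Finset.range_eq_Ico]
    _ = Finset.Icc 1 M := by
      rw [Finset.image_add_right_Ico, zero_add, Finset.Ico_add_one_right_eq_Icc]

theorem rrSched_eq_image_Ico (M T k : ℕ) :
    rrSched M T k =
      (Finset.Ico ((k - 1) * min M T) ((k - 1) * min M T + min M T)).image (rrClient M) := by
  have hshift : Finset.Ico ((k - 1) * min M T) ((k - 1) * min M T + min M T) =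
      (Finset.range (min M T)).image ((k - 1) * min M T + ·) := by
    rw [Finset.range_eq_Ico, Finset.image_add_left_Ico, add_zero]
  rw [hshift, Finset.image_image]
  rfl

theorem rrClient_mem_rrSched_succ_iff
    (hn : n ∈ Set.Ico (k * min M T) (k * min M T + M)) :
    rrClient M n ∈ rrSched M T (k + 1) ↔ n < k * min M T + min M T := by
  have hsub : Finset.Ico (k * min M T) (k * min M T + min M T) ⊆
      Finset.Ico (k * min M T) (k * min M T + M) :=
    Finset.Ico_subset_Ico_right (Nat.add_le_add_left (min_le_left M T) _)
  rw [rrSched_eq_image_Ico, Nat.add_sub_cancel, ← Finset.mem_coe, Finset.coe_image,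
    (injOn_rrClient_Ico M _).mem_image_iff (Finset.coe_subset.2 hsub) (by simpa using hn),
    Finset.mem_coe, Finset.mem_Ico, and_iff_right hn.1]

theorem antitoneOn_ageP_rrSched {h1 : ℕ → ℕ} (hanti : AntitoneOn h1 (Set.Icc 1 M)) (T k : ℕ) :
    AntitoneOn (fun n => ageP h1 (rrSched M T) (k + 1) (rrClient M n))
      (Set.Ico (k * min M T) (k * min M T + M)) := by
  induction k with
  | zero =>
    rintro m ⟨-, hm⟩ n ⟨-, hn⟩ hmn
    rw [zero_mul, zero_add] at hm hn
    simp only [rrClient_of_lt hm, rrClient_of_lt hn]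
    exact hanti ⟨m.succ_pos, hm⟩ ⟨n.succ_pos, hn⟩ (Nat.succ_le_succ hmn)
  | succ k ih =>
    rintro m ⟨hm, hmM⟩ n ⟨hn, hnM⟩ hmn
    rw [Nat.succ_mul] at hm hmM hn hnM
    obtain hold | hnew := lt_or_ge n (k * min M T + M)
    · have hm_mem : m ∈ Set.Ico (k * min M T) (k * min M T + M) := ⟨by lia, by lia⟩
      have hn_mem : n ∈ Set.Ico (k * min M T) (k * min M T + M) := ⟨by lia, hold⟩
      have hm_unserved := (rrClient_mem_rrSched_succ_iff hm_mem).not.2 hm.not_gt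
      have hn_unserved := (rrClient_mem_rrSched_succ_iff hn_mem).not.2 hn.not_gt
      simp only [ageP_add_two_of_notMem hm_unserved, ageP_add_two_of_notMem hn_unserved]
      exact Nat.succ_le_succ (ih hm_mem hn_mem hmn)
    · obtain ⟨n, rfl⟩ := Nat.exists_eq_add_of_le' ((Nat.le_add_left M _).trans hnew)
      have hn_served : rrClient M n ∈ rrSched M T (k + 1) :=
        (rrClient_mem_rrSched_succ_iff ⟨by lia, by lia⟩).2 (by lia)
      simp only [rrClient_add_self, ageP_add_two_of_mem hn_served]
      exact one_le_ageP_add_two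

end RoundRobin

theorem stmt0_general (M T : ℕ) (h1 : ℕ → ℕ) (hanti : AntitoneOn h1 (Set.Icc 1 M))
    (k : ℕ) (hk : 1 ≤ k) (j : ℕ) (hj : 1 ≤ j) (i' : ℕ) (hi' : i' ∈ Finset.Icc 1 M)
    (hi'new : ∀ j' : ℕ, 1 ≤ j' → j' < j →
      i' ≠ rrClient M ((k - 1) * min M T + j' - 1)) :
    ageP h1 (rrSched M T) k i'
      ≤ ageP h1 (rrSched M T) k (rrClient M ((k - 1) * min M T + j - 1)) := by
  obtain ⟨k, rfl⟩ := Nat.exists_eq_add_of_le' hk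
  rw [Nat.add_sub_cancel] at hi'new ⊢
  rw [← image_rrClient_Ico M (k * min M T)] at hi'
  obtain ⟨n, hn, rfl⟩ := Finset.mem_image.1 hi'
  rw [Finset.mem_Ico] at hn
  have hjn : k * min M T + j - 1 ≤ n := by
    by_contra! hlt
    exact hi'new (n - k * min M T + 1) (by lia) (by lia) (congrArg (rrClient M) (by lia))
  exact antitoneOn_ageP_rrSched hanti T k ⟨by lia, by lia⟩ hn hjn

/-- Each delivery of the round-robin schedule goes to a client of maximal current age
among the clients not yet served in that frame: round-robin is a realization of the
Greedy policy when all channels are error-free. -/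
theorem stmt0 (M T : ℕ) (hM : 1 ≤ M) (hT : 1 ≤ T)
    (h1 : ℕ → ℕ) (hpos : ∀ i ∈ Finset.Icc 1 M, 1 ≤ h1 i)
    (hdec : ∀ i j : ℕ, 1 ≤ i → i < j → j ≤ M → h1 j < h1 i)
    (k : ℕ) (hk : 1 ≤ k) (j : ℕ) (hj : 1 ≤ j) (hjL : j ≤ min M T)
    (i' : ℕ) (hi'1 : 1 ≤ i') (hi'M : i' ≤ M)
    (hi'new : ∀ j' : ℕ, 1 ≤ j' → j' < j →
      i' ≠ rrClient M ((k - 1) * min M T + j' - 1)) :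
    ageP h1 (rrSched M T) k i'
      ≤ ageP h1 (rrSched M T) k (rrClient M ((k - 1) * min M T + j - 1)) := by
  have hanti : StrictAntiOn h1 (Set.Icc 1 M) := fun i hi j hj hij => hdec i j hi.1 hij hj.2
  exact stmt0_general M T h1 hanti.antitoneOn k hk j hj i' (Finset.mem_Icc.2 ⟨hi'1, hi'M⟩) hi'new
end

section
/- Let M ≥ 1 and T ≥ 1 be integers, and write M = m1·T + m2 with m1 = ⌊M/T⌋ and m2 = M mod T. Under the round-robin schedule, for every choice of positive integer initial ages and for every frame k ≥ m1 + 2, the sum of the ages satisfies Σ_{i=1}^M h_{k,i} = T·m1·(m1+1)/2 + m2·(m1+1). In particular the sum of the ages is constant from frame m1+2 onward and is independent of the initial ages. -/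
/-!
Any `M` consecutive round-robin slots serve every client exactly once. Hence, once `M` slots have
passed, the client served `j < M` slots before the most recent one has not been served since, and
its age is the number `j / L + 1` of frames elapsed, where `L = min M T`. Counting slots
backwards, each of the ages `1, 2, …, m1` thus occurs `T` times, and the remaining `m2` clients
have age `m1 + 1`.
-/

open Finset

section Sums

variable {α : Type*} [AddCommMonoid α]

theorem sum_Ico_comp_div (f : ℕ → α) {T q r : ℕ} (hr : r ≤ T) :
    ∑ j ∈ Ico (T * q) (T * q + r), f (j / T) = r • f q := by
  have hdiv : ∀ j ∈ Ico (T * q) (T * q + r), j / T = q := fun j hj ↦ by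
    rw [mem_Ico] at hj
    exact Nat.div_eq_of_lt_le (by linarith) (by linarith)
  rw [sum_congr rfl fun j hj ↦ congrArg f (hdiv j hj), sum_const, Nat.card_Ico,
    Nat.add_sub_cancel_left]

theorem sum_range_mul_comp_div (f : ℕ → α) (T q : ℕ) :
    ∑ j ∈ range (T * q), f (j / T) = T • ∑ i ∈ range q, f i := by
  induction q with
  | zero => simp
  | succ q ih =>
    rw [sum_range_succ, nsmul_add, ← ih, ← sum_Ico_comp_div f le_rfl, Nat.mul_succ,
      sum_range_add_sum_Ico _ (Nat.le_add_right _ _)]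

theorem sum_range_comp_div (f : ℕ → α) (M : ℕ) {T : ℕ} (hT : 0 < T) :
    ∑ j ∈ range M, f (j / T) = T • ∑ i ∈ range (M / T), f i + (M % T) • f (M / T) := by
  rw [← sum_range_mul_comp_div, ← sum_Ico_comp_div f (Nat.mod_lt M hT).le,
    sum_range_add_sum_Ico _ (Nat.le_add_right _ _), Nat.div_add_mod]

end Sums

theorem sum_range_div_add_one (M : ℕ) {T : ℕ} (hT : 0 < T) :
    ∑ j ∈ range M, (j / T + 1) =
      T * (M / T) * (M / T + 1) / 2 + (M % T) * (M / T + 1) := by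
  have gauss : ∑ i ∈ range (M / T), (i + 1) = M / T * (M / T + 1) / 2 := by
    rw [← add_zero (∑ i ∈ range (M / T), (i + 1)), ← sum_range_succ' (fun i ↦ i), sum_range_id,
      Nat.add_sub_cancel, mul_comm]
  rw [sum_range_comp_div (· + 1) M hT, gauss, smul_eq_mul, smul_eq_mul, mul_assoc T,
    Nat.mul_div_assoc T (Nat.even_mul_succ_self _).two_dvd]

theorem ageP_of_last_served {h1 : ℕ → ℕ} {s : ℕ → Finset ℕ} {i k d : ℕ} (hserved : i ∈ s (k + 1))
    (hidle : ∀ l, k + 1 < l → l ≤ k + d + 1 → i ∉ s l) : ageP h1 s (k + d + 2) i = d + 1 := by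
  induction d with
  | zero => rw [ageP, if_pos hserved]
  | succ d ih =>
    rw [ageP, if_neg (hidle _ (by omega) le_rfl)]
    exact congrArg (· + 1) (ih fun l hl hld ↦ hidle l hl (by omega))

section RoundRobin

variable {M T K : ℕ}

theorem rrClient_injOn_Ico (M N : ℕ) : Set.InjOn (rrClient M) (Ico N (N + M)) :=
  (add_left_injective 1).comp_injOn (Nat.mod_injOn_Ico N M)

theorem image_rrClient_Ico_s1 (M N : ℕ) : (Ico N (N + M)).image (rrClient M) = Icc 1 M := by
  change (Ico N (N + M)).image ((· + 1) ∘ (· % M)) = Icc 1 M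
  rw [← image_image, Nat.image_Ico_mod, range_eq_Ico, image_add_right_Ico, zero_add,
    Ico_add_one_right_eq_Icc]

theorem sum_Icc_eq_sum_range_rrClient {α : Type*} [AddCommMonoid α] (f : ℕ → α) (M N : ℕ) :
    ∑ i ∈ Icc 1 M, f i = ∑ j ∈ range M, f (rrClient M (N + M - 1 - j)) := by
  rw [← image_rrClient_Ico_s1 M N, sum_image (rrClient_injOn_Ico M N), sum_Ico_eq_sum_range,
    Nat.add_sub_cancel_left, ← sum_range_reflect]
  refine sum_congr rfl fun j hj ↦ ?_
  rw [mem_range] at hj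
  congr 2
  omega

theorem mem_rrSched_succ (hL : 0 < min M T) {i k : ℕ} :
    i ∈ rrSched M T (k + 1) ↔ ∃ n, n / min M T = k ∧ rrClient M n = i := by
  rw [rrSched, mem_image, Nat.add_sub_cancel]
  constructor
  · rintro ⟨j, hj, rfl⟩
    refine ⟨k * min M T + j, ?_, rfl⟩
    rw [mul_comm, Nat.mul_add_div hL, Nat.div_eq_of_lt (mem_range.1 hj), add_zero]
  · rintro ⟨n, rfl, rfl⟩
    exact ⟨n % min M T, mem_range.2 (Nat.mod_lt n hL), by rw [Nat.div_add_mod']⟩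

theorem ageP_rrSched_rrClient (h1 : ℕ → ℕ) {n : ℕ} (hn : n < K * min M T)
    (hnM : K * min M T ≤ n + M) :
    ageP h1 (rrSched M T) (K + 1) (rrClient M n) = K - n / min M T := by
  have hL : 0 < min M T := Nat.pos_of_mul_pos_left (Nat.zero_lt_of_lt hn)
  have hserved : rrClient M n ∈ rrSched M T (n / min M T + 1) :=
    (mem_rrSched_succ hL).2 ⟨n, rfl, rfl⟩
  obtain ⟨d, rfl⟩ := Nat.exists_eq_add_of_lt ((Nat.div_lt_iff_lt_mul hL).2 hn)
  have hidle : ∀ l, n / min M T + 1 < l → l ≤ n / min M T + d + 1 →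
      rrClient M n ∉ rrSched M T l := by
    rintro (_ | k) hl hlK hmem
    · exact absurd hl (Nat.not_lt_zero _)
    obtain ⟨n', rfl, heq⟩ := (mem_rrSched_succ hL).1 hmem
    have hlt : n < n' := Nat.lt_of_div_lt_div (Nat.lt_of_succ_lt_succ hl)
    have hn' : n' < n + M := ((Nat.div_lt_iff_lt_mul hL).1 hlK).trans_le hnM
    exact hlt.ne' (rrClient_injOn_Ico M n (by simp [hlt.le, hn'])
      (by simp [hlt.trans hn']) heq)
  rw [ageP_of_last_served hserved hidle, add_assoc, Nat.add_sub_cancel_left]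

theorem sum_ageP_rrSched (h1 : ℕ → ℕ) (hK : M ≤ K * min M T) :
    ∑ i ∈ Icc 1 M, ageP h1 (rrSched M T) (K + 1) i = ∑ j ∈ range M, (j / min M T + 1) := by
  rw [sum_Icc_eq_sum_range_rrClient _ M (K * min M T - M), Nat.sub_add_cancel hK]
  refine sum_congr rfl fun j hj ↦ ?_
  have hjM : j < M := mem_range.1 hj
  have hjK : j < K * min M T := hjM.trans_le hK
  have hframe : (K * min M T - 1 - j) / min M T = K - (j / min M T + 1) := by
    rw [Nat.sub_sub, add_comm 1 j, mul_comm, Nat.mul_sub_div _ _ _ (by rwa [mul_comm])]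
  rw [ageP_rrSched_rrClient h1 (by omega) (by omega), hframe,
    Nat.sub_sub_self (Nat.succ_le_of_lt (Nat.div_lt_of_lt_mul (by rwa [mul_comm])))]

theorem div_min_of_lt {j : ℕ} (hj : j < M) : j / min M T = j / T := by
  rcases le_total M T with h | h
  · rw [min_eq_left h, Nat.div_eq_of_lt hj, Nat.div_eq_of_lt (hj.trans_le h)]
  · rw [min_eq_right h]

theorem le_mul_min_of_le_mul (hK : M ≤ K * T) : M ≤ K * min M T := by
  rcases K.eq_zero_or_pos with rfl | hKpos
  · simpa only [zero_mul] using hK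
  · rw [← Nat.mul_min_mul_left]
    exact le_min (Nat.le_mul_of_pos_left M hKpos) hK

theorem stmt1_general (hT : 0 < T) (h1 : ℕ → ℕ) (hK : M ≤ K * T) :
    ∑ i ∈ Icc 1 M, ageP h1 (rrSched M T) (K + 1) i =
      T * (M / T) * (M / T + 1) / 2 + (M % T) * (M / T + 1) := by
  rw [sum_ageP_rrSched h1 (le_mul_min_of_le_mul hK), ← sum_range_div_add_one M hT]
  exact sum_congr rfl fun j hj ↦ by rw [div_min_of_lt (mem_range.1 hj)]

end RoundRobin

/-- Steady state of the round-robin (Greedy) schedule with error-free channels: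
writing `M = m1·T + m2` with `m1 = ⌊M/T⌋`, `m2 = M mod T`, for every frame
`k ≥ m1 + 2` the sum of the ages equals `T·m1·(m1+1)/2 + m2·(m1+1)`, independently
of the initial ages. -/
theorem stmt1 (M T : ℕ) (hM : 1 ≤ M) (hT : 1 ≤ T)
    (h1 : ℕ → ℕ) (hpos : ∀ i ∈ Finset.Icc 1 M, 1 ≤ h1 i)
    (k : ℕ) (hk : M / T + 2 ≤ k) :
    ∑ i ∈ Finset.Icc 1 M, ageP h1 (rrSched M T) k i
      = T * (M / T) * (M / T + 1) / 2 + (M % T) * (M / T + 1) := by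
  obtain ⟨K, rfl⟩ := Nat.exists_eq_add_of_le' (Nat.one_le_of_lt hk)
  exact stmt1_general hT h1 (Nat.lt_mul_of_div_lt (Nat.le_of_succ_le_succ hk) hT).le
end

section
/- Let (I_m)_{m≥1} be positive integers, t_0 = 0, t_D = Σ_{m=1}^{D} I_m, and let h_k = k − max{ t_j : t_j < k } be the associated age process. Suppose that as D → ∞, (1/D)·Σ_{m=1}^{D} I_m → μ and (1/D)·Σ_{m=1}^{D} I_m² → s for some finite reals μ ≥ 1 and s. Then the time-average age converges: (1/K)·Σ_{k=1}^{K} h_k → s/(2μ) + 1/2 as K → ∞. -/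
open Filter

/-- `deliveryTime I D = Σ_{m=1}^{D} I m`, the frame of the `D`-th delivery
(`deliveryTime I 0 = 0`). -/
def deliveryTime (I : ℕ → ℕ) (D : ℕ) : ℕ := ∑ m ∈ Finset.Icc 1 D, I m

/-- The single-client age process: `ageS I k = k − max{ t_j : t_j < k }`, where
`t_j` are the partial sums of the inter-delivery times `I`. -/
def ageS (I : ℕ → ℕ) (k : ℕ) : ℕ :=
  k - ((Finset.range (k + 1)).filter (fun j => deliveryTime I j < k)).sup (deliveryTime I)

/-!
The age takes the values `1, …, I m` during the `m`-th inter-delivery period, so the ages up to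
the `D`-th delivery sum to `∑ m ≤ D, (I m ^ 2 + I m) / 2`. This gives the limit along the
delivery times `t_D`. The cumulative age is monotone and `t_{D+1} / t_D → 1`, so the limit along
the delivery times is the limit along all frames.
-/

theorem tendsto_succ_div_self_of_tendsto_div_natCast {u : ℕ → ℝ} {a : ℝ} (ha : a ≠ 0)
    (hu : Tendsto (fun n : ℕ => u n / n) atTop (nhds a)) :
    Tendsto (fun n => u (n + 1) / u n) atTop (nhds 1) := by
  have hindex : Tendsto (fun n : ℕ => (n : ℝ) / ((n : ℝ) + 1)) atTop (nhds 1) :=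
    tendsto_natCast_div_add_atTop 1
  have hlim := (((tendsto_add_atTop_iff_nat 1).2 hu).div hu ha).div hindex one_ne_zero
  rw [div_self ha, div_one] at hlim
  refine hlim.congr' ?_
  filter_upwards [eventually_ne_atTop 0] with n hn
  simp only [Pi.div_apply, Nat.cast_add_one]
  field_simp

theorem tendsto_div_natCast_of_monotone_of_tendsto_comp {u : ℕ → ℝ} (hu : Monotone u) {c : ℕ → ℕ}
    {a b : ℝ} (hb : 0 < b) (hc : Tendsto (fun n : ℕ => (c n : ℝ) / n) atTop (nhds b))
    (huc : Tendsto (fun n : ℕ => u (c n) / n) atTop (nhds a)) :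
    Tendsto (fun n : ℕ => u n / n) atTop (nhds (a / b)) := by
  have hc_atTop : Tendsto c atTop atTop := by
    refine tendsto_natCast_atTop_iff.1 ((hc.pos_mul_atTop hb tendsto_natCast_atTop_atTop).congr' ?_)
    filter_upwards [eventually_ne_atTop 0] with n hn
    exact div_mul_cancel₀ _ (Nat.cast_ne_zero.2 hn)
  have hratio : Tendsto (fun n => (c (n + 1) : ℝ) / c n) atTop (nhds 1) :=
    tendsto_succ_div_self_of_tendsto_div_natCast hb.ne' hc
  have hquot : Tendsto (fun n => u (c n) / c n) atTop (nhds (a / b)) := by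
    refine (huc.div hc hb.ne').congr' ?_
    filter_upwards [eventually_ne_atTop 0] with n hn
    exact div_div_div_cancel_right₀ (Nat.cast_ne_zero.2 hn) _ _
  refine tendsto_div_of_monotone_of_exists_subseq_tendsto_div u (a / b) hu fun q hq =>
    ⟨c, ?_, hc_atTop, hquot⟩
  filter_upwards [hratio.eventually_le_const hq, hc_atTop.eventually_gt_atTop 0] with n hn hpos
  exact (div_le_iff₀ (Nat.cast_pos.2 hpos)).1 hn

theorem sum_Icc_one_add {M : Type*} [AddCommMonoid M] (f : ℕ → M) (m n : ℕ) :
    ∑ k ∈ Finset.Icc 1 (m + n), f k =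
      ∑ k ∈ Finset.Icc 1 m, f k + ∑ k ∈ Finset.Icc 1 n, f (m + k) := by
  induction n with
  | zero => simp
  | succ n ih =>
    rw [← add_assoc, Finset.sum_Icc_succ_top (by omega), ih,
      Finset.sum_Icc_succ_top (by omega), add_assoc, add_assoc]

theorem sum_Icc_one_natCast {𝕜 : Type*} [Field 𝕜] [CharZero 𝕜] (n : ℕ) :
    ∑ k ∈ Finset.Icc 1 n, (k : 𝕜) = ((n : 𝕜) ^ 2 + n) / 2 := by
  induction n with
  | zero => simp
  | succ n ih =>
    rw [Finset.sum_Icc_succ_top (by omega), ih]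
    push_cast
    field_simp
    ring

theorem monotone_sum_Icc_one {M : Type*} [AddCommMonoid M] [PartialOrder M]
    [IsOrderedAddMonoid M] {f : ℕ → M} (hf : ∀ k, 0 ≤ f k) :
    Monotone fun n => ∑ k ∈ Finset.Icc 1 n, f k := fun _ _ h =>
  Finset.sum_le_sum_of_subset_of_nonneg (Finset.Icc_subset_Icc_right h) fun k _ _ => hf k

section DeliveryTime

variable {I : ℕ → ℕ}

theorem deliveryTime_succ (D : ℕ) :
    deliveryTime I (D + 1) = deliveryTime I D + I (D + 1) :=
  Finset.sum_Icc_succ_top (by omega) I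

theorem monotone_deliveryTime : Monotone (deliveryTime I) :=
  monotone_nat_of_le_succ fun D => by
    rw [deliveryTime_succ]
    exact Nat.le_add_right _ _

theorem natCast_deliveryTime (D : ℕ) :
    (deliveryTime I D : ℝ) = ∑ m ∈ Finset.Icc 1 D, (I m : ℝ) :=
  Nat.cast_sum _ _

theorem le_deliveryTime (hI : ∀ m : ℕ, 1 ≤ m → 1 ≤ I m) (D : ℕ) : D ≤ deliveryTime I D := by
  simpa [deliveryTime] using
    Finset.card_nsmul_le_sum (Finset.Icc 1 D) I 1 fun m hm => hI m (Finset.mem_Icc.1 hm).1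

theorem sup_deliveryTime_lt (hI : ∀ m : ℕ, 1 ≤ m → 1 ≤ I m) {D k : ℕ}
    (hlt : deliveryTime I D < k) (hle : k ≤ deliveryTime I (D + 1)) :
    ((Finset.range (k + 1)).filter fun j => deliveryTime I j < k).sup (deliveryTime I) =
      deliveryTime I D := by
  apply le_antisymm
  · refine Finset.sup_le fun j hj => monotone_deliveryTime ?_
    have hj_lt : deliveryTime I j < deliveryTime I (D + 1) :=
      (Finset.mem_filter.1 hj).2.trans_le hle
    exact Nat.lt_succ_iff.1 (monotone_deliveryTime.reflect_lt hj_lt)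
  · have hD : D < k + 1 := ((le_deliveryTime hI D).trans_lt hlt).trans k.lt_succ_self
    exact Finset.le_sup (Finset.mem_filter.2 ⟨Finset.mem_range.2 hD, hlt⟩)

theorem ageS_deliveryTime_add (hI : ∀ m : ℕ, 1 ≤ m → 1 ≤ I m) {D r : ℕ}
    (hr : r ∈ Finset.Icc 1 (I (D + 1))) : ageS I (deliveryTime I D + r) = r := by
  obtain ⟨hr_pos, hr_le⟩ := Finset.mem_Icc.1 hr
  have hle : deliveryTime I D + r ≤ deliveryTime I (D + 1) := by
    rw [deliveryTime_succ]
    exact Nat.add_le_add_left hr_le _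
  rw [ageS, sup_deliveryTime_lt hI (Nat.lt_add_of_pos_right hr_pos) hle, Nat.add_sub_cancel_left]

theorem sum_ageS_deliveryTime (hI : ∀ m : ℕ, 1 ≤ m → 1 ≤ I m) (D : ℕ) :
    ∑ k ∈ Finset.Icc 1 (deliveryTime I D), (ageS I k : ℝ) =
      ∑ m ∈ Finset.Icc 1 D, ((I m : ℝ) ^ 2 + I m) / 2 := by
  induction D with
  | zero => simp [deliveryTime]
  | succ D ih =>
    have hperiod : ∑ r ∈ Finset.Icc 1 (I (D + 1)), (ageS I (deliveryTime I D + r) : ℝ) =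
        ((I (D + 1) : ℝ) ^ 2 + I (D + 1)) / 2 := by
      rw [← sum_Icc_one_natCast]
      exact Finset.sum_congr rfl fun r hr => congrArg Nat.cast (ageS_deliveryTime_add hI hr)
    rw [deliveryTime_succ, sum_Icc_one_add, ih, hperiod, Finset.sum_Icc_succ_top (by omega)]

end DeliveryTime

/-- Renewal-reward convergence of the time-average age: if the sample means of the
inter-delivery times converge to `μ` and of their squares to `s`, then the
time-average age converges to `s/(2μ) + 1/2`. -/
theorem stmt6 (I : ℕ → ℕ) (hI : ∀ m : ℕ, 1 ≤ m → 1 ≤ I m)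
    (μ s : ℝ) (hμ : 1 ≤ μ)
    (hmean : Tendsto (fun D : ℕ => (∑ m ∈ Finset.Icc 1 D, (I m : ℝ)) / D)
      atTop (nhds μ))
    (hsq : Tendsto (fun D : ℕ => (∑ m ∈ Finset.Icc 1 D, (I m : ℝ) ^ 2) / D)
      atTop (nhds s)) :
    Tendsto (fun K : ℕ => (∑ k ∈ Finset.Icc 1 K, (ageS I k : ℝ)) / K)
      atTop (nhds (s / (2 * μ) + 1 / 2)) := by
  have hμ_pos : 0 < μ := one_pos.trans_le hμ
  have hlim : (s + μ) / 2 / μ = s / (2 * μ) + 1 / 2 := by field_simp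
  have hperiod : Tendsto (fun D : ℕ => (deliveryTime I D : ℝ) / D) atTop (nhds μ) := by
    simpa only [natCast_deliveryTime] using hmean
  have hreward : Tendsto
      (fun D : ℕ => (∑ k ∈ Finset.Icc 1 (deliveryTime I D), (ageS I k : ℝ)) / D)
      atTop (nhds ((s + μ) / 2)) := by
    refine ((hsq.add hmean).div_const 2).congr fun D => ?_
    rw [sum_ageS_deliveryTime hI, ← Finset.sum_div, Finset.sum_add_distrib, ← add_div,
      div_right_comm]
  rw [← hlim]
  exact tendsto_div_natCast_of_monotone_of_tendsto_comp
    (monotone_sum_Icc_one fun k => Nat.cast_nonneg (ageS I k)) hμ_pos hperiod hreward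
end

section
/- Let p ∈ (0,1], α > 0, T ≥ 1 an integer, C > 0, and Z = 1/2 + (1−p)^T/(1 − (1−p)^T). Define f : [0,1] → ℝ by f(γ) = (1−γ) − Z + √( 2C/(T·α·p) − γ(1−γ) + Z² ). Then: (i) f is strictly decreasing on [0,1]; (ii) f(0) − f(1) = 1; and consequently (iii) there is exactly one γ* ∈ [0,1) such that f(γ*) is an integer, and f(γ*) = ⌊f(0)⌋ = ⌊1 − Z + √(Z² + 2C/(T·α·p))⌋. -/
/-!
Put `D = 2C/(Tαp) + Z² − 1/4` and `x = γ − 1/2`. Completing the square under the root gives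
`f(γ) = (1/2 − Z) + (√(x² + D) − x)`. Because `Z ≥ 1/2` and `C > 0`, the constant `D` is positive,
so the graph of `√(x² + D)` is a branch of a hyperbola whose slope stays below `1`, and `f` is
strictly decreasing on the whole line. The root takes the same value at `γ = 0` and `γ = 1`, whence
`f(0) − f(1) = 1`. The interval `(f(1), f(0)]` thus contains exactly one integer, namely `⌊f(0)⌋`,
and `f` maps `[0, 1)` bijectively onto this interval.
-/

section FloorOfLeftEndpoint

variable {ι R : Type*} [Ring R] [LinearOrder R] [IsStrictOrderedRing R] [FloorRing R]
  {f : ι → R} {a b : ι}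

theorem exists_mem_Ico_eq_floor_left [ConditionallyCompleteLinearOrder ι] [TopologicalSpace ι]
    [OrderTopology ι] [DenselyOrdered ι] [TopologicalSpace R] [OrderClosedTopology R]
    (hab : a ≤ b) (hf : ContinuousOn f (Set.Icc a b)) (hdrop : f b + 1 ≤ f a) :
    ∃ x ∈ Set.Ico a b, f x = ⌊f a⌋ := by
  have hlt : f b < ⌊f a⌋ := (le_sub_iff_add_le.2 hdrop).trans_lt (Int.sub_one_lt_floor (f a))
  exact intermediate_value_Ico' hab hf ⟨hlt, Int.floor_le (f a)⟩

theorem floor_left_eq_of_strictAntiOn_Icc [PartialOrder ι] {x : ι} {n : ℤ}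
    (hf : StrictAntiOn f (Set.Icc a b)) (hdrop : f a ≤ f b + 1) (hx : x ∈ Set.Ico a b)
    (hn : f x = n) : ⌊f a⌋ = n := by
  have hab : a ≤ b := hx.1.trans hx.2.le
  have hxab : x ∈ Set.Icc a b := Set.Ico_subset_Icc_self hx
  have hle : f x ≤ f a := hf.antitoneOn (Set.left_mem_Icc.2 hab) hxab hx.1
  have hlt : f b < f x := hf hxab (Set.right_mem_Icc.2 hab) hx.2
  rw [hn] at hle hlt
  exact Int.floor_eq_iff.2 ⟨hle, hdrop.trans_lt (add_lt_add_left hlt 1)⟩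

end FloorOfLeftEndpoint

theorem strictAnti_sqrt_sq_add_sub_self {D : ℝ} (hD : 0 < D) :
    StrictAnti fun x : ℝ => √(x ^ 2 + D) - x := by
  intro x y hxy
  have hgap : x < √(x ^ 2 + D) := Real.lt_sqrt_of_sq_lt (lt_add_of_pos_right _ hD)
  have hshift : √(y ^ 2 + D) < √(x ^ 2 + D) + (y - x) := by
    rw [Real.sqrt_lt' (add_pos (by positivity) (sub_pos.2 hxy))]
    calc y ^ 2 + D
        < y ^ 2 + D + 2 * ((y - x) * (√(x ^ 2 + D) - x)) :=
          lt_add_of_pos_right _ (mul_pos two_pos (mul_pos (sub_pos.2 hxy) (sub_pos.2 hgap)))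
      _ = (√(x ^ 2 + D) + (y - x)) ^ 2 := by
          linear_combination -Real.sq_sqrt (show 0 ≤ x ^ 2 + D by positivity)
  change √(y ^ 2 + D) - y < √(x ^ 2 + D) - x
  linarith

/-- The candidate threshold of the Frame-Based Decoupled Model as a function of the fractional
offset `γ`. The parameter `K` stands for the normalized service charge `2C/(Tαp)`, so that the
reliability, the weight and the frame length enter only through `K` and `Z`. -/
noncomputable def candidateThreshold (K Z γ : ℝ) : ℝ :=
  (1 - γ) - Z + √(K - γ * (1 - γ) + Z ^ 2)

namespace candidateThreshold

theorem eq_sqrt_sq_add_sub (K Z γ : ℝ) :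
    candidateThreshold K Z γ =
      (1 / 2 - Z) + (√((γ - 1 / 2) ^ 2 + (K + Z ^ 2 - 1 / 4)) - (γ - 1 / 2)) := by
  have hsquare : K - γ * (1 - γ) + Z ^ 2 = (γ - 1 / 2) ^ 2 + (K + Z ^ 2 - 1 / 4) := by ring
  rw [candidateThreshold, hsquare]
  ring

protected theorem strictAnti {K Z : ℝ} (h : 1 / 4 < K + Z ^ 2) :
    StrictAnti (candidateThreshold K Z) := by
  intro x y hxy
  rw [eq_sqrt_sq_add_sub, eq_sqrt_sq_add_sub]
  gcongr ?_ + ?_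
  exact strictAnti_sqrt_sq_add_sub_self (sub_pos.2 h) (sub_lt_sub_right hxy _)

protected theorem continuous (K Z : ℝ) : Continuous (candidateThreshold K Z) := by
  unfold candidateThreshold
  fun_prop

theorem zero_sub_one (K Z : ℝ) : candidateThreshold K Z 0 - candidateThreshold K Z 1 = 1 := by
  simp [candidateThreshold]

end candidateThreshold

theorem one_fourth_lt_charge_add_sq {p α C : ℝ} {T : ℕ} (hp : p ∈ Set.Ioc (0 : ℝ) 1)
    (hα : 0 < α) (hT : 1 ≤ T) (hC : 0 < C) :
    1 / 4 < 2 * C / (T * α * p) + (1 / 2 + (1 - p) ^ T / (1 - (1 - p) ^ T)) ^ 2 := by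
  obtain ⟨hp₀, hp₁⟩ := hp
  have hfail₀ : 0 ≤ 1 - p := sub_nonneg.2 hp₁
  have hfail₁ : (1 - p) ^ T ≤ 1 := pow_le_one₀ hfail₀ (sub_le_self _ hp₀.le)
  have hcharge : 0 < 2 * C / (T * α * p) := by positivity
  have hZ : 1 / 2 ≤ 1 / 2 + (1 - p) ^ T / (1 - (1 - p) ^ T) :=
    le_add_of_nonneg_right (div_nonneg (pow_nonneg hfail₀ T) (sub_nonneg.2 hfail₁))
  calc (1 / 4 : ℝ) = (1 / 2) ^ 2 := by norm_num
    _ ≤ (1 / 2 + (1 - p) ^ T / (1 - (1 - p) ^ T)) ^ 2 := by gcongr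
    _ < 2 * C / (T * α * p) + (1 / 2 + (1 - p) ^ T / (1 - (1 - p) ^ T)) ^ 2 :=
      lt_add_of_pos_left _ hcharge

theorem stmt13_general {K Z : ℝ} (h : 1 / 4 < K + Z ^ 2) :
    StrictAnti (candidateThreshold K Z)
    ∧ candidateThreshold K Z 0 - candidateThreshold K Z 1 = 1
    ∧ ∃ γ ∈ Set.Ico (0 : ℝ) 1, candidateThreshold K Z γ = ⌊candidateThreshold K Z 0⌋
        ∧ ∀ γ' ∈ Set.Ico (0 : ℝ) 1, (∃ n : ℤ, candidateThreshold K Z γ' = n) → γ' = γ := by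
  have hanti := candidateThreshold.strictAnti h
  have hdrop : candidateThreshold K Z 0 = candidateThreshold K Z 1 + 1 :=
    sub_eq_iff_eq_add'.1 (candidateThreshold.zero_sub_one K Z)
  obtain ⟨γ, hγ, hfloor⟩ := exists_mem_Ico_eq_floor_left zero_le_one
    (candidateThreshold.continuous K Z).continuousOn hdrop.ge
  refine ⟨hanti, candidateThreshold.zero_sub_one K Z, γ, hγ, hfloor, ?_⟩
  rintro γ' hγ' ⟨n, hn⟩
  have hfloor' : ⌊candidateThreshold K Z 0⌋ = n :=
    floor_left_eq_of_strictAntiOn_Icc (hanti.strictAntiOn _) hdrop.le hγ' hn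
  exact hanti.injective (by rw [hn, hfloor, hfloor'])

/-- The candidate threshold `f(γ) = (1−γ) − Z + √(2C/(Tαp) − γ(1−γ) + Z²)` of the
Frame-Based Decoupled Model is strictly decreasing on `[0,1]`, drops by exactly `1`
over `[0,1]`, and hence attains an integer value at exactly one `γ* ∈ [0,1)`, where
its value is `⌊f(0)⌋ = ⌊1 − Z + √(Z² + 2C/(Tαp))⌋`. -/
theorem stmt13 (p α C : ℝ) (T : ℕ) (hp : p ∈ Set.Ioc (0 : ℝ) 1) (hα : 0 < α)
    (hT : 1 ≤ T) (hC : 0 < C) :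
    let Z : ℝ := 1 / 2 + (1 - p) ^ T / (1 - (1 - p) ^ T)
    let f : ℝ → ℝ := fun γ =>
      (1 - γ) - Z + Real.sqrt (2 * C / ((T : ℝ) * α * p) - γ * (1 - γ) + Z ^ 2)
    StrictAntiOn f (Set.Icc 0 1)
    ∧ f 0 - f 1 = 1
    ∧ ∃ γ ∈ Set.Ico (0 : ℝ) 1, f γ = (⌊f 0⌋ : ℝ)
        ∧ ∀ γ' ∈ Set.Ico (0 : ℝ) 1, (∃ n : ℤ, f γ' = (n : ℝ)) → γ' = γ :=
  (stmt13_general (one_fourth_lt_charge_add_sq hp hα hT hC)).imp_left fun h => h.strictAntiOn _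
end

section
/- Let p ∈ (0,1], α > 0 and T ≥ 1 an integer, and set Z = 1/2 + (1−p)^T/(1 − (1−p)^T). Define H(C) = ⌊ 1 − Z + √( Z² + 2C/(p·T·α) ) ⌋ for C ≥ 0. Then: (i) H is monotone nondecreasing in C on [0,∞); (ii) H(0) = 1; and (iii) H(C) → ∞ as C → ∞. Equivalently, the idling set P(C) = { h ∈ {1,2,…} : h < H(C) } increases monotonically from the empty set to all of {1,2,…} as C increases from 0 to ∞, i.e. the Decoupled Model is indexable. -/
open Filter

/-!
At `C = 0` the square root equals `Z` because `Z ≥ 0`, so it cancels and the threshold is `⌊1⌋`;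
as `C` grows, the square root increases without bound. The idling set depends on `C` only through
the threshold, so it inherits both the monotonicity and the two extreme values.
-/

/-- The constant `Z` of the Decoupled Model with channel reliability `p` and frame length `T`. A
frame fails with probability `(1 - p) ^ T`, so the quotient is the expected number of failed frames
before a success. The quotient is `0`, by division by zero, when `(1 - p) ^ T = 1`. -/
noncomputable def frameOffset (p : ℝ) (T : ℕ) : ℝ :=
  1 / 2 + (1 - p) ^ T / (1 - (1 - p) ^ T)

/-- The age threshold `H(C)` of the optimal policy under service charge `C`. The constants `Z` and
`k` are free parameters; the Decoupled Model has `Z = frameOffset p T` and `k = p * T * α`. -/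
noncomputable def ageThreshold (Z k C : ℝ) : ℤ :=
  ⌊1 - Z + √(Z ^ 2 + 2 * C / k)⌋

/-- The idling set of the threshold policy with threshold `n`: the ages at which the policy does
not transmit. Ages start at `1`. -/
def idlingSet (n : ℤ) : Set ℕ :=
  {h | 1 ≤ h ∧ (h : ℤ) < n}

theorem frameOffset_nonneg {p : ℝ} (hp₀ : 0 ≤ p) (hp₁ : p ≤ 1) (T : ℕ) : 0 ≤ frameOffset p T := by
  have failure_nonneg : 0 ≤ (1 - p) ^ T := pow_nonneg (sub_nonneg.2 hp₁) T
  have failure_le_one : (1 - p) ^ T ≤ 1 := pow_le_one₀ (sub_nonneg.2 hp₁) (sub_le_self 1 hp₀)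
  exact add_nonneg one_half_pos.le (div_nonneg failure_nonneg (sub_nonneg.2 failure_le_one))

theorem ageThreshold_mono (Z : ℝ) {k : ℝ} (hk : 0 ≤ k) : Monotone (ageThreshold Z k) := by
  intro C₁ C₂ hC
  unfold ageThreshold
  gcongr

theorem ageThreshold_zero {Z : ℝ} (hZ : 0 ≤ Z) (k : ℝ) : ageThreshold Z k 0 = 1 := by
  simp [ageThreshold, Real.sqrt_sq hZ]

theorem tendsto_ageThreshold_atTop (Z : ℝ) {k : ℝ} (hk : 0 < k) :
    Tendsto (ageThreshold Z k) atTop atTop := by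
  have radicand : Tendsto (fun C : ℝ ↦ Z ^ 2 + 2 * C / k) atTop atTop :=
    tendsto_atTop_add_const_left _ _ ((tendsto_id.const_mul_atTop two_pos).atTop_div_const hk)
  exact tendsto_floor_atTop.comp
    (tendsto_atTop_add_const_left _ _ (Real.tendsto_sqrt_atTop.comp radicand))

theorem idlingSet_mono : Monotone idlingSet :=
  fun _ _ hmn _ ⟨one_le, lt⟩ ↦ ⟨one_le, lt.trans_le hmn⟩

theorem idlingSet_of_le_one {n : ℤ} (hn : n ≤ 1) : idlingSet n = ∅ :=
  Set.eq_empty_of_forall_notMem fun _ ⟨one_le, lt⟩ ↦ by omega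

theorem eventually_mem_idlingSet {ι : Type*} {l : Filter ι} {H : ι → ℤ} (hH : Tendsto H l atTop)
    {h : ℕ} (hh : 1 ≤ h) : ∀ᶠ i in l, h ∈ idlingSet (H i) :=
  (hH.eventually_gt_atTop (h : ℤ)).mono fun _ lt ↦ ⟨hh, lt⟩

/-- Indexability of the Decoupled Model: the threshold
`H(C) = ⌊1 − Z + √(Z² + 2C/(pTα))⌋` is nondecreasing in the service charge `C ≥ 0`,
equals `1` at `C = 0`, and tends to `∞` as `C → ∞`; equivalently the idling set
`P(C) = {h ≥ 1 : h < H(C)}` increases monotonically from `∅` to all of `{1,2,…}`. -/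
theorem stmt14 (p α : ℝ) (T : ℕ) (hp : p ∈ Set.Ioc (0 : ℝ) 1) (hα : 0 < α)
    (hT : 1 ≤ T) :
    let Z : ℝ := 1 / 2 + (1 - p) ^ T / (1 - (1 - p) ^ T)
    let H : ℝ → ℤ := fun C => ⌊1 - Z + Real.sqrt (Z ^ 2 + 2 * C / (p * (T : ℝ) * α))⌋
    let P : ℝ → Set ℕ := fun C => {h : ℕ | 1 ≤ h ∧ (h : ℤ) < H C}
    (∀ C₁ C₂ : ℝ, 0 ≤ C₁ → C₁ ≤ C₂ → H C₁ ≤ H C₂)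
    ∧ H 0 = 1
    ∧ Tendsto H atTop atTop
    ∧ (∀ C₁ C₂ : ℝ, 0 ≤ C₁ → C₁ ≤ C₂ → P C₁ ⊆ P C₂)
    ∧ P 0 = ∅
    ∧ (∀ h : ℕ, 1 ≤ h → ∃ C : ℝ, 0 ≤ C ∧ h ∈ P C) := by
  intro Z H P
  have scale_pos : 0 < p * T * α := mul_pos (mul_pos hp.1 (Nat.cast_pos.2 hT)) hα
  have H_mono : Monotone H := ageThreshold_mono Z scale_pos.le
  have H_zero : H 0 = 1 := ageThreshold_zero (frameOffset_nonneg hp.1.le hp.2 T) _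
  have H_tendsto : Tendsto H atTop atTop := tendsto_ageThreshold_atTop Z scale_pos
  have P_mono : Monotone P := idlingSet_mono.comp H_mono
  have P_zero : P 0 = ∅ := idlingSet_of_le_one H_zero.le
  have P_exhausts : ∀ h : ℕ, 1 ≤ h → ∃ C : ℝ, 0 ≤ C ∧ h ∈ P C := fun _ hh ↦
    ((eventually_ge_atTop 0).and (eventually_mem_idlingSet H_tendsto hh)).exists
  exact ⟨fun _ _ _ hC ↦ H_mono hC, H_zero, H_tendsto, fun _ _ _ hC ↦ P_mono hC, P_zero, P_exhausts⟩
end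

section
/- Let p ∈ (0,1], α > 0, T ≥ 1 an integer, h ≥ 1 an integer, and Z = 1/2 + (1−p)^T/(1 − (1−p)^T). Then the unique real C ≥ 0 satisfying 1 − Z + √( Z² + 2C/(p·T·α) ) = h + 1 is C = (p·T·α/2)·h·( h + (1 + (1−p)^T)/(1 − (1−p)^T) ). That is, the Whittle Index — the infimum service charge making idling and transmitting equally desirable in age state h — is proportional to p·α·h·( h + (1+(1−p)^T)/(1−(1−p)^T) ). -/
/-!
Write `q = (1 - p)^T` and `κ = pTα`. The equation says `√(Z² + 2C/κ) = Z + h`. As `|q| < 1` makes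
`Z` positive, squaring loses nothing and leaves the linear equation
`2C/κ = (Z + h)² - Z² = h(h + 2Z)`, in which `2Z = (1 + q)/(1 - q)`.
-/

theorem abs_one_sub_pow_lt_one {R : Type*} [CommRing R] [LinearOrder R] [IsStrictOrderedRing R]
    {p : R} (hp : p ∈ Set.Ioo 0 2) {n : ℕ} (hn : n ≠ 0) : |(1 - p) ^ n| < 1 := by
  obtain ⟨hp_pos, hp_lt⟩ := hp
  have abs_lt_one : |1 - p| < 1 := abs_lt.2 ⟨by linarith, by linarith⟩
  rw [abs_pow]
  exact pow_lt_one₀ (abs_nonneg _) abs_lt_one hn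

theorem one_add_div_one_sub_pos {K : Type*} [Field K] [LinearOrder K] [IsStrictOrderedRing K]
    {q : K} (hq : |q| < 1) : 0 < (1 + q) / (1 - q) := by
  obtain ⟨neg_one_lt, lt_one⟩ := abs_lt.1 hq
  exact div_pos (by linarith) (by linarith)

theorem two_mul_half_add_div_one_sub {K : Type*} [Field K] [NeZero (2 : K)] {q : K} (hq : q ≠ 1) :
    2 * (1 / 2 + q / (1 - q)) = (1 + q) / (1 - q) := by
  have one_sub_ne_zero : 1 - q ≠ 0 := sub_ne_zero.2 hq.symm
  field_simp
  ring

theorem sq_add_two_mul_div_eq_add_sq_iff {K : Type*} [Field K] [NeZero (2 : K)] {κ : K}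
    (hκ : κ ≠ 0) (z x C : K) :
    z ^ 2 + 2 * C / κ = (z + x) ^ 2 ↔ C = κ / 2 * x * (x + 2 * z) := by
  have expand_sq : (z + x) ^ 2 = z ^ 2 + x * (x + 2 * z) := by ring
  have move_half : κ / 2 * x * (x + 2 * z) = x * (x + 2 * z) * κ / 2 := by ring
  rw [expand_sq, add_right_inj, div_eq_iff hκ, move_half, eq_div_iff two_ne_zero, mul_comm]

-- A negative radicand is no exception: then `√` returns `0`, whereas `z + x > 0`.
theorem one_sub_add_sqrt_eq_add_one_iff {κ z x : ℝ} (hκ : κ ≠ 0) (hzx : 0 < z + x) (C : ℝ) :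
    1 - z + √(z ^ 2 + 2 * C / κ) = x + 1 ↔ C = κ / 2 * x * (x + 2 * z) :=
  calc
    1 - z + √(z ^ 2 + 2 * C / κ) = x + 1 ↔ √(z ^ 2 + 2 * C / κ) = z + x := by
      constructor <;> intro h <;> linarith
    _ ↔ z ^ 2 + 2 * C / κ = (z + x) ^ 2 := by
      rw [Real.sqrt_eq_iff_mul_self_eq_of_pos hzx, ← sq, eq_comm]
    _ ↔ C = κ / 2 * x * (x + 2 * z) := sq_add_two_mul_div_eq_add_sq_iff hκ z x C

theorem stmt15_general {p α h : ℝ} {T : ℕ} (hp : p ∈ Set.Ioo 0 2) (hα : 0 < α) (hT : T ≠ 0)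
    (hh : 0 ≤ h) :
    let Z : ℝ := 1 / 2 + (1 - p) ^ T / (1 - (1 - p) ^ T)
    let C₀ : ℝ := p * T * α / 2 * h * (h + (1 + (1 - p) ^ T) / (1 - (1 - p) ^ T))
    0 ≤ C₀ ∧ ∀ C : ℝ, 1 - Z + √(Z ^ 2 + 2 * C / (p * T * α)) = h + 1 ↔ C = C₀ := by
  intro Z C₀
  have hq : |(1 - p) ^ T| < 1 := abs_one_sub_pow_lt_one hp hT
  have ratio_pos := one_add_div_one_sub_pos hq
  have two_mul_Z : 2 * Z = (1 + (1 - p) ^ T) / (1 - (1 - p) ^ T) :=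
    two_mul_half_add_div_one_sub (abs_lt.1 hq).2.ne
  have hκ : 0 < p * T * α := mul_pos (mul_pos hp.1 (by positivity)) hα
  refine ⟨by positivity, fun C => ?_⟩
  have Z_add_h_pos : 0 < Z + h := by linarith
  rw [one_sub_add_sqrt_eq_add_one_iff hκ.ne' Z_add_h_pos, two_mul_Z]

/-- Closed form of the Whittle Index: for age state `h ≥ 1`, the unique service
charge `C ≥ 0` with `1 − Z + √(Z² + 2C/(pTα)) = h + 1` is
`C = (pTα/2)·h·(h + (1+(1−p)^T)/(1−(1−p)^T))`. -/
theorem stmt15 (p α : ℝ) (T h : ℕ) (hp : p ∈ Set.Ioc (0 : ℝ) 1) (hα : 0 < α)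
    (hT : 1 ≤ T) (hh : 1 ≤ h) :
    let Z : ℝ := 1 / 2 + (1 - p) ^ T / (1 - (1 - p) ^ T)
    let C₀ : ℝ := (p * (T : ℝ) * α / 2) * (h : ℝ) *
      ((h : ℝ) + (1 + (1 - p) ^ T) / (1 - (1 - p) ^ T))
    0 ≤ C₀
    ∧ 1 - Z + Real.sqrt (Z ^ 2 + 2 * C₀ / (p * (T : ℝ) * α)) = (h : ℝ) + 1
    ∧ ∀ C : ℝ, 0 ≤ C →
        1 - Z + Real.sqrt (Z ^ 2 + 2 * C / (p * (T : ℝ) * α)) = (h : ℝ) + 1 →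
        C = C₀ := by
  obtain ⟨C₀_nonneg, eq_iff⟩ := stmt15_general ⟨hp.1, hp.2.trans_lt one_lt_two⟩ hα
    (Nat.one_le_iff_ne_zero.1 hT) (Nat.cast_nonneg (α := ℝ) h)
  exact ⟨C₀_nonneg, (eq_iff _).2 rfl, fun C _ => (eq_iff C).1⟩
end
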